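/- For every integer r ≥ 1, the odd cycle C_{2r+1} satisfies ST^(4)*(C_{2r+1}) = 2 + 1/r. -/

import Mathlib

/-!
Lower bound: a complete legal sequence drives a greedy multicolouring. Give each vertex `v` a list
of `S v + T v` colours. An operation at `u` saving `W` spends on `u` a colour of its list that lies
in no list of `W` (one exists because `S u + T u > ∑_{w ∈ W} (S w + T w)`) and deletes it from the
lists of the neighbours of `u`; only unsaved neighbours pay for this, with a unit of shield. So
degeneracy yields disjoint `t`-sets on adjacent vertices out of `s + t` colours, and since a colour
class is independent, `|V| t ≤ (s + t) α(G)`. For `C_{2r+1}` the independence number is at most `r`.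

Upper bound: `(s, t) = (r + 1, r)` attains the infimum. A round starting at the vertex `i` operates
on `i, i + 2, …, i + 2r - 2` in this order, the operation on `i + 2j` with `j ≥ 1` saving
`i + 2j - 1`, which has already paid in this round, so that its value of `S + T` is the smaller one.
A round lowers `S + T` by exactly one at every vertex: through `T` at the `r` operated vertices,
through `S` at the `r + 1` others. The `2r + 1` rounds, one from each starting vertex, form a
complete legal sequence.
-/

open scoped Classical

noncomputable section

namespace StrictDeg

/-- The state of the `ShadeSave` process: the active vertex set (the vertex set of the
current induced subgraph), the current shield, and the current target. -/
structure State (V : Type) where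
  A : Finset V
  S : V → ℕ
  T : V → ℕ

variable {V : Type}

/-- The output of the operation `ShadeSave(G[A], S, T, u, W)`. -/
def applyStep (G : SimpleGraph V) (st : State V) (u : V) (W : Finset V) : State V where
  A := if st.T u = 1 then st.A.erase u else st.A
  S := fun v => if G.Adj u v ∧ v ∈ st.A ∧ v ∉ W then st.S v - 1 else st.S v
  T := fun v => if v = u ∧ 1 < st.T u then st.T u - 1 else st.T v

/-- Legality of the operation `ShadeSave(G[A], S, T, u, W)`:  `u` is a vertex of the current
graph, `W` is a set of neighbors of `u` in the current graph,
`S u + T u > ∑_{w ∈ W} (S w + T w)`, and the output shield is nonnegative (in `ℕ` terms: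
every neighbor of `u` in the current graph that is not saved has shield value at least 1). -/
def LegalStep (G : SimpleGraph V) (st : State V) (u : V) (W : Finset V) : Prop :=
  u ∈ st.A ∧
  (∀ w ∈ W, w ∈ st.A ∧ G.Adj u w) ∧
  (∑ w ∈ W, (st.S w + st.T w)) < st.S u + st.T u ∧
  (∀ v ∈ st.A, G.Adj u v → v ∉ W → 1 ≤ st.S v)

/-- `LegalSeq G st l` means `l` is a legal sequence of `ShadeSave` operations starting
from the state `st`. -/
def LegalSeq (G : SimpleGraph V) : State V → List (V × Finset V) → Prop
  | _, [] => True
  | st, op :: rest => LegalStep G st op.1 op.2 ∧ LegalSeq G (applyStep G st op.1 op.2) rest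

/-- The final state after applying the operations in `l` in order. -/
def finalState (G : SimpleGraph V) (st : State V) (l : List (V × Finset V)) : State V :=
  l.foldl (fun s op => applyStep G s op.1 op.2) st

/-- The induced subgraph of `G` on `A`, with shield `S` and target `T`, admits a complete
legal sequence, i.e. it is `ST⁽³⁾`-`(S,T)`-degenerate. -/
def ST3DegOn (G : SimpleGraph V) (A : Finset V) (S T : V → ℕ) : Prop :=
  ∃ l : List (V × Finset V),
    LegalSeq G ⟨A, S, T⟩ l ∧ (finalState G ⟨A, S, T⟩ l).A = ∅

/-- The induced subgraph of `G` on `A`, with shield `S` and target `T`, admits a complete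
restricted (every operation saves on at most one vertex) legal sequence, i.e. it is
`ST⁽⁴⁾`-`(S,T)`-degenerate. -/
def ST4DegOn (G : SimpleGraph V) (A : Finset V) (S T : V → ℕ) : Prop :=
  ∃ l : List (V × Finset V),
    LegalSeq G ⟨A, S, T⟩ l ∧ (∀ op ∈ l, op.2.card ≤ 1) ∧
      (finalState G ⟨A, S, T⟩ l).A = ∅

/-- `G` is `ST⁽³⁾`-`(S,T)`-degenerate. -/
def ST3Deg [Fintype V] (G : SimpleGraph V) (S T : V → ℕ) : Prop :=
  ST3DegOn G Finset.univ S T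

/-- `G` is `ST⁽⁴⁾`-`(S,T)`-degenerate. -/
def ST4Deg [Fintype V] (G : SimpleGraph V) (S T : V → ℕ) : Prop :=
  ST4DegOn G Finset.univ S T

/-- The fractional strict type-3 degeneracy
`ST⁽³⁾*(G) = inf {(s+t)/t : G is ST⁽³⁾-(s,t)-degenerate}`. -/
def ST3Star [Fintype V] (G : SimpleGraph V) : ℝ :=
  sInf { x : ℝ | ∃ s t : ℕ, 1 ≤ t ∧ ST3Deg G (fun _ => s) (fun _ => t) ∧
    x = ((s : ℝ) + t) / t }

/-- The fractional strict type-4 degeneracy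
`ST⁽⁴⁾*(G) = inf {(s+t)/t : G is ST⁽⁴⁾-(s,t)-degenerate}`. -/
def ST4Star [Fintype V] (G : SimpleGraph V) : ℝ :=
  sInf { x : ℝ | ∃ s t : ℕ, 1 ≤ t ∧ ST4Deg G (fun _ => s) (fun _ => t) ∧
    x = ((s : ℝ) + t) / t }

/-- A cover `𝓗 = (L, H)` of the graph `G`. -/
structure Cover (G : SimpleGraph V) where
  /-- The vertex type of the cover graph `H`. -/
  U : Type
  fin : Fintype U
  /-- The cover graph. -/
  H : SimpleGraph U
  /-- The lists: `L v` is the part of the partition of `V(H)` corresponding to `v`. -/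
  L : V → Finset U
  part : ∀ x : U, ∃! v : V, x ∈ L v
  indep : ∀ v : V, ∀ x ∈ L v, ∀ y ∈ L v, ¬ H.Adj x y
  cross : ∀ u v : V, ∀ x ∈ L u, ∀ y ∈ L v, H.Adj x y → G.Adj u v
  matching : ∀ u v : V, G.Adj u v → ∀ x ∈ L u, ∀ y ∈ L v, ∀ y' ∈ L v,
      H.Adj x y → H.Adj x y' → y = y'

/-- `G` is `(𝓗, b)`-colorable: there is an independent set of the cover graph meeting
every list in at least `b` vertices. -/
def Cover.Colorable {G : SimpleGraph V} (C : Cover G) (b : ℕ) : Prop :=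
  ∃ I : Finset C.U, (∀ x ∈ I, ∀ y ∈ I, ¬ C.H.Adj x y) ∧ ∀ v : V, b ≤ (I ∩ C.L v).card

/-- `G` is `(a,b)`-DP-colorable. -/
def DPColorable (G : SimpleGraph V) (a b : ℕ) : Prop :=
  ∀ C : Cover G, (∀ v : V, (C.L v).card = a) → C.Colorable b

/-- The fractional DP-chromatic number
`χ*_DP(G) = inf {a/b : G is (a,b)-DP-colorable}`. -/
def DPStar (G : SimpleGraph V) : ℝ :=
  sInf { x : ℝ | ∃ a b : ℕ, 1 ≤ b ∧ b ≤ a ∧ DPColorable G a b ∧ x = (a : ℝ) / b }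

/-- `G` is `(F₁, F₂)`-DP-colorable. -/
def DPColorableFn (G : SimpleGraph V) (F₁ F₂ : V → ℕ) : Prop :=
  ∀ C : Cover G, (∀ v : V, (C.L v).card = F₁ v) →
    ∃ I : Finset C.U, (∀ x ∈ I, ∀ y ∈ I, ¬ C.H.Adj x y) ∧
      ∀ v : V, (I ∩ C.L v).card = F₂ v

section ListMulticoloring

variable {α : Type*} {G : SimpleGraph V}

/-- `C` is a multicolouring of `G` from the lists `L`: each vertex receives a set of colours of its
list, and adjacent vertices receive disjoint sets. The number of colours at a vertex is left open;
demands such as `T v ≤ (C v).card` are stated separately. -/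
structure IsListMulticoloring (G : SimpleGraph V) (L C : V → Finset α) : Prop where
  subset : ∀ v, C v ⊆ L v
  disjoint : ∀ ⦃u v⦄, G.Adj u v → Disjoint (C u) (C v)

theorem IsListMulticoloring.update_insert {L L' C : V → Finset α} {u : V} {c : α}
    (hC : IsListMulticoloring G L' C) (hL : ∀ v, L' v ⊆ L v) (hc : c ∈ L u)
    (hcL : ∀ v, G.Adj u v → c ∉ L' v) :
    IsListMulticoloring G L (Function.update C u (insert c (C u))) where
  subset v := by
    obtain rfl | hvu := eq_or_ne v u
    · rw [Function.update_self]
      exact Finset.insert_subset hc ((hC.subset v).trans (hL v))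
    · rw [Function.update_of_ne hvu]
      exact (hC.subset v).trans (hL v)
  disjoint a b hab := by
    have hcC : ∀ v, G.Adj u v → c ∉ C v := fun v hv h => hcL v hv (hC.subset v h)
    obtain rfl | ha := eq_or_ne a u
    · rw [Function.update_self, Function.update_of_ne hab.ne', Finset.disjoint_insert_left]
      exact ⟨hcC b hab, hC.disjoint hab⟩
    · obtain rfl | hb := eq_or_ne b u
      · rw [Function.update_self, Function.update_of_ne ha, Finset.disjoint_insert_right]
        exact ⟨hcC a hab.symm, hC.disjoint hab⟩
      · rw [Function.update_of_ne ha, Function.update_of_ne hb]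
        exact hC.disjoint hab

/-- Colour classes are independent; count the pairs of a vertex and one of its colours. -/
theorem IsListMulticoloring.card_mul_le_card_mul_indepNum [Fintype V] {K : Finset α}
    {C : V → Finset α} {t : ℕ} (hC : IsListMulticoloring G (fun _ => K) C)
    (ht : ∀ v, t ≤ (C v).card) : Fintype.card V * t ≤ K.card * G.indepNum := by
  refine Finset.card_mul_le_card_mul (fun v c => c ∈ C v) (fun v _ => ?_) (fun c _ => ?_)
  · rw [Finset.bipartiteAbove, Finset.filter_mem_eq_inter, Finset.inter_eq_right.2 (hC.subset v)]
    exact ht v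
  · refine SimpleGraph.IsIndepSet.card_le_indepNum fun u hu v hv _ hadj => ?_
    exact Finset.disjoint_left.1 (hC.disjoint hadj)
      (Finset.mem_filter.1 hu).2 (Finset.mem_filter.1 hv).2

end ListMulticoloring

section GreedyColoring

variable {α : Type*} {G : SimpleGraph V} {st : State V} {u v : V} {W : Finset V}

theorem mem_applyStep_A : v ∈ (applyStep G st u W).A ↔ v ∈ st.A ∧ (v = u → st.T u ≠ 1) := by
  unfold applyStep
  split_ifs with h <;> simp [h, and_comm]

theorem sub_one_le_applyStep_T : st.T u - 1 ≤ (applyStep G st u W).T u := by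
  simp only [applyStep, true_and]
  split_ifs <;> omega

theorem applyStep_T_of_ne (h : v ≠ u) : (applyStep G st u W).T v = st.T v := by
  simp [applyStep, h]

theorem applyStep_T_pos (hT : ∀ v ∈ st.A, 0 < st.T v) (hv : v ∈ (applyStep G st u W).A) :
    0 < (applyStep G st u W).T v := by
  have := hT v (mem_applyStep_A.1 hv).1
  simp only [applyStep]
  split_ifs <;> omega

theorem LegalStep.exists_color (h : LegalStep G st u W) {L : V → Finset α}
    (hL : ∀ v ∈ st.A, (L v).card = st.S v + st.T v) : ∃ c ∈ L u, ∀ w ∈ W, c ∉ L w := by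
  obtain ⟨hu, hW, hsum, -⟩ := h
  have hlt : (W.biUnion L).card < (L u).card :=
    calc (W.biUnion L).card ≤ ∑ w ∈ W, (L w).card := Finset.card_biUnion_le
      _ = ∑ w ∈ W, (st.S w + st.T w) := Finset.sum_congr rfl fun w hw => hL w (hW w hw).1
      _ < (L u).card := by rwa [hL u hu]
  obtain ⟨c, hcu, hcW⟩ := Finset.exists_mem_notMem_of_card_lt_card hlt
  exact ⟨c, hcu, fun w hw hcw => hcW (Finset.mem_biUnion.2 ⟨w, hw, hcw⟩)⟩

/-- The lists are allowed to be too long: they are trimmed to the exact length `S + T` before the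
colour `c` is chosen, which is then deleted from the closed neighbourhood of `u`. -/
theorem LegalStep.exists_color_lists (h : LegalStep G st u W) (hT : 0 < st.T u)
    {L : V → Finset α} (hL : ∀ v ∈ st.A, st.S v + st.T v ≤ (L v).card) :
    ∃ c ∈ L u, ∃ L' : V → Finset α, (∀ v, L' v ⊆ L v) ∧ (∀ v, v = u ∨ G.Adj u v → c ∉ L' v) ∧
      ∀ v ∈ (applyStep G st u W).A,
        (applyStep G st u W).S v + (applyStep G st u W).T v ≤ (L' v).card := by
  have htrim : ∀ v, ∃ K ⊆ L v, v ∈ st.A → K.card = st.S v + st.T v := fun v => by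
    by_cases hv : v ∈ st.A
    · obtain ⟨K, hK, hcard⟩ := Finset.exists_subset_card_eq (hL v hv)
      exact ⟨K, hK, fun _ => hcard⟩
    · exact ⟨∅, Finset.empty_subset _, fun h => absurd h hv⟩
  choose K hKL hK using htrim
  obtain ⟨c, hcu, hcW⟩ := h.exists_color hK
  refine ⟨c, hKL u hcu, fun v => if v = u ∨ G.Adj u v then (K v).erase c else K v,
    fun v => ?_, fun v hv => by simp [hv], fun v hv => ?_⟩
  · dsimp only
    split_ifs
    exacts [(Finset.erase_subset _ _).trans (hKL v), hKL v]
  · obtain ⟨hvA, hvu⟩ := mem_applyStep_A.1 hv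
    have hcard := hK v hvA
    have herase := Finset.pred_card_le_card_erase (s := K v) (a := c)
    obtain rfl | hne := eq_or_ne v u
    · have hT1 : 1 < st.T v := lt_of_le_of_ne hT (hvu rfl).symm
      simp only [applyStep, SimpleGraph.irrefl, false_and, if_false, hT1, and_self, if_true,
        true_or]
      omega
    by_cases hadj : G.Adj u v
    · by_cases hvW : v ∈ W
      · simp [applyStep, hne, hadj, hvW, Finset.erase_eq_of_notMem (hcW v hvW), hcard]
      · have hS : 1 ≤ st.S v := h.2.2.2 v hvA hadj hvW
        simp only [applyStep, hne, hadj, hvA, hvW, not_false_eq_true, and_self, if_true,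
          false_and, if_false, or_true]
        omega
    · simp [applyStep, hne, hadj, hcard]

theorem LegalSeq.exists_listMulticoloring {l : List (V × Finset V)} (hl : LegalSeq G st l)
    (hfin : (finalState G st l).A = ∅) (hT : ∀ v ∈ st.A, 0 < st.T v) {L : V → Finset α}
    (hL : ∀ v ∈ st.A, st.S v + st.T v ≤ (L v).card) :
    ∃ C : V → Finset α, IsListMulticoloring G L C ∧ ∀ v ∈ st.A, st.T v ≤ (C v).card := by
  induction l generalizing st L with
  | nil =>
    have hA : st.A = ∅ := hfin
    exact ⟨fun _ => ∅, ⟨fun _ => Finset.empty_subset _, fun _ _ _ => Finset.disjoint_empty_left _⟩,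
      by simp [hA]⟩
  | cons op l ih =>
    obtain ⟨u, W⟩ := op
    obtain ⟨hstep, hl⟩ := hl
    obtain ⟨c, hcL, L', hL'L, hcL', hcard⟩ := hstep.exists_color_lists (hT u hstep.1) hL
    obtain ⟨C, hC, hCT⟩ := ih hl hfin (fun v => applyStep_T_pos hT) hcard
    refine ⟨_, hC.update_insert hL'L hcL fun v hv => hcL' v (Or.inr hv), fun v hv => ?_⟩
    obtain rfl | hvu := eq_or_ne v u
    · have hcC : c ∉ C v := fun h => hcL' v (Or.inl rfl) (hC.subset v h)
      rw [Function.update_self, Finset.card_insert_of_notMem hcC, ← Nat.sub_le_iff_le_add]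
      by_cases hT1 : st.T v = 1
      · simp [hT1]
      · exact sub_one_le_applyStep_T.trans (hCT v (mem_applyStep_A.2 ⟨hv, fun _ => hT1⟩))
    · rw [Function.update_of_ne hvu, ← applyStep_T_of_ne (G := G) (W := W) hvu]
      exact hCT v (mem_applyStep_A.2 ⟨hv, fun h => absurd h hvu⟩)

theorem ST4Deg.st3Deg [Fintype V] {S T : V → ℕ} (h : ST4Deg G S T) : ST3Deg G S T :=
  let ⟨l, hl, _, hfin⟩ := h
  ⟨l, hl, hfin⟩

theorem ST3Deg.card_mul_le_mul_indepNum [Fintype V] {s t : ℕ} (ht : 0 < t)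
    (h : ST3Deg G (fun _ => s) (fun _ => t)) :
    Fintype.card V * t ≤ (s + t) * G.indepNum := by
  obtain ⟨l, hl, hfin⟩ := h
  obtain ⟨C, hC, hCt⟩ := hl.exists_listMulticoloring (L := fun _ => Finset.range (s + t)) hfin
    (fun _ _ => ht) (fun _ _ => (Finset.card_range _).ge)
  simpa using hC.card_mul_le_card_mul_indepNum fun v => hCt v (Finset.mem_univ v)

end GreedyColoring

section CycleGraph

variable {n : ℕ} [NeZero n]

theorem cycleGraph_neighborSet_of_two_le (hn : 2 ≤ n) (v : Fin n) :
    (SimpleGraph.cycleGraph n).neighborSet v = {v - 1, v + 1} := by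
  obtain ⟨m, rfl⟩ := Nat.exists_eq_add_of_le' hn
  exact SimpleGraph.cycleGraph_neighborSet

/-- An independent set is disjoint from its rotation by one. -/
theorem indepNum_cycleGraph_le (hn : 2 ≤ n) : (SimpleGraph.cycleGraph n).indepNum ≤ n / 2 := by
  obtain ⟨I, hI, hcard⟩ := (SimpleGraph.cycleGraph n).exists_isNIndepSet_indepNum
  have hdisj : Disjoint I (I.map (addRightEmbedding 1)) := by
    refine Finset.disjoint_left.2 fun v hv hv' => ?_
    obtain ⟨u, hu, rfl⟩ := Finset.mem_map.1 hv'
    have hadj : (SimpleGraph.cycleGraph n).Adj u (u + 1) := by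
      simp [← SimpleGraph.mem_neighborSet, cycleGraph_neighborSet_of_two_le hn]
    exact hI hu hv hadj.ne hadj
  have hle := Finset.card_le_univ (I.disjUnion _ hdisj)
  rw [Finset.card_disjUnion, Finset.card_map, Fintype.card_fin] at hle
  omega

end CycleGraph

section Congruence

variable {G : SimpleGraph V} {st st' : State V}

theorem LegalSeq.congr {l : List (V × Finset V)} (hA : st'.A = st.A)
    (hS : ∀ v ∈ st.A, st'.S v = st.S v) (hT : ∀ v ∈ st.A, st'.T v = st.T v)
    (hl : LegalSeq G st l) :
    LegalSeq G st' l ∧ (finalState G st' l).A = (finalState G st l).A := by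
  induction l generalizing st st' with
  | nil => exact ⟨trivial, hA⟩
  | cons op l ih =>
    obtain ⟨u, W⟩ := op
    obtain ⟨⟨hu, hW, hsum, hpos⟩, hl⟩ := hl
    have hTu := hT u hu
    have hstep : LegalStep G st' u W := by
      refine ⟨hA ▸ hu, fun w hw => hA ▸ hW w hw, ?_, fun v hv hadj hvW => ?_⟩
      · rw [hS u hu, hTu, Finset.sum_congr rfl fun w hw => by
          rw [hS w (hW w hw).1, hT w (hW w hw).1]]
        exact hsum
      · rw [hA] at hv
        exact hS v hv ▸ hpos v hv hadj hvW
    obtain ⟨hl', hfin⟩ := ih (st := applyStep G st u W) (st' := applyStep G st' u W)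
      (by simp only [applyStep, hA, hTu])
      (fun v hv => by simp only [applyStep, hA, hS v (mem_applyStep_A.1 hv).1])
      (fun v hv => by simp only [applyStep, hTu, hT v (mem_applyStep_A.1 hv).1]) hl
    exact ⟨⟨hstep, hl'⟩, hfin⟩

theorem ST4DegOn.congr {A : Finset V} {S T S' T' : V → ℕ} (hS : ∀ v ∈ A, S' v = S v)
    (hT : ∀ v ∈ A, T' v = T v) (h : ST4DegOn G A S T) : ST4DegOn G A S' T' := by
  obtain ⟨l, hl, hcard, hfin⟩ := h
  obtain ⟨hl', hfin'⟩ := hl.congr (st := ⟨A, S, T⟩) (st' := ⟨A, S', T'⟩) rfl hS hT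
  exact ⟨l, hl', hcard, hfin'.trans hfin⟩

theorem LegalStep.st4DegOn {u : V} {W : Finset V} (hstep : LegalStep G st u W)
    (hW : W.card ≤ 1)
    (h : ST4DegOn G (applyStep G st u W).A (applyStep G st u W).S (applyStep G st u W).T) :
    ST4DegOn G st.A st.S st.T := by
  obtain ⟨l, hl, hcard, hfin⟩ := h
  exact ⟨(u, W) :: l, ⟨hstep, hl⟩, List.forall_mem_cons.2 ⟨hW, hcard⟩, hfin⟩

end Congruence

section AddOperation

variable {G : SimpleGraph V} {A W : Finset V} {S T T' : V → ℕ} {u v : V}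

theorem legalStep_add_operation [DecidableEq V] (hu : u ∈ A) (hadj : ∀ w ∈ W, G.Adj u w)
    (hsum : ∑ w ∈ W, (S w + T w) ≤ S u + T u) :
    LegalStep G ⟨A, S + (G.neighborSet u \ W).indicator 1, T + Pi.single u 1⟩ u
      {w ∈ W | w ∈ A} := by
  refine ⟨hu, fun w hw => ?_, ?_, fun v hv huv hvW => ?_⟩
  · obtain ⟨hwW, hwA⟩ := Finset.mem_filter.1 hw
    exact ⟨hwA, hadj w hwW⟩
  · calc _ = ∑ w ∈ W with w ∈ A, (S w + T w) := Finset.sum_congr rfl fun w hw => by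
          have hwW := (Finset.mem_filter.1 hw).1
          simp [hwW, (hadj w hwW).ne']
      _ ≤ ∑ w ∈ W, (S w + T w) := Finset.sum_le_sum_of_subset (Finset.filter_subset _ _)
      _ < _ := by
          simp only [Pi.add_apply, Pi.single_eq_same]
          omega
  · have : v ∉ W := fun h => hvW (Finset.mem_filter.2 ⟨h, hv⟩)
    simp [huv, this]

theorem applyStep_add_operation_S [DecidableEq V] (hv : v ∈ A) :
    (applyStep G ⟨A, S + (G.neighborSet u \ W).indicator 1, T'⟩ u {w ∈ W | w ∈ A}).S v = S v := by
  by_cases huv : G.Adj u v <;> by_cases hvW : v ∈ W <;> simp [applyStep, huv, hvW, hv]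

theorem applyStep_add_operation_T {S' : V → ℕ} [DecidableEq V] (hT : 0 < T v) :
    (applyStep G ⟨A, S', T + Pi.single u 1⟩ u W).T v = T v := by
  obtain rfl | hvu := eq_or_ne v u
  · simp [applyStep, hT]
  · simp [applyStep, hvu]

end AddOperation

section Support

variable [Fintype V] {G : SimpleGraph V} {S T : V → ℕ}

/-- `ST⁽⁴⁾`-`(S,T)`-degeneracy for targets that may vanish: a vertex of target `0` counts as already
removed. With this convention a complete legal sequence can be built from its last operation
backwards, each operation adding its demands to `S` and `T`. -/
def ST4DegSupport (G : SimpleGraph V) (S T : V → ℕ) : Prop :=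
  ST4DegOn G {v | 0 < T v} S T

theorem st4DegSupport_zero (G : SimpleGraph V) (S : V → ℕ) : ST4DegSupport G S 0 :=
  ⟨[], trivial, by simp, by simp [finalState]⟩

theorem ST4DegSupport.st4Deg (h : ST4DegSupport G S T) (hT : ∀ v, 0 < T v) : ST4Deg G S T := by
  simpa [ST4DegSupport, ST4Deg, hT] using h

/-- The operation actually performed saves only those vertices of `W` that are not yet removed. -/
theorem ST4DegSupport.add_operation [DecidableEq V] (h : ST4DegSupport G S T) {u : V}
    {W : Finset V} (hW : W.card ≤ 1) (hadj : ∀ w ∈ W, G.Adj u w)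
    (hsum : ∑ w ∈ W, (S w + T w) ≤ S u + T u) :
    ST4DegSupport G (S + (G.neighborSet u \ W).indicator 1) (T + Pi.single u 1) := by
  let A : Finset V := {v | 0 < (T + Pi.single u 1 : V → ℕ) v}
  have hu : u ∈ A := by simp [A]
  refine (legalStep_add_operation hu hadj hsum).st4DegOn ((Finset.card_filter_le _ _).trans hW) ?_
  have hA : (applyStep G ⟨A, S + (G.neighborSet u \ W).indicator 1, T + Pi.single u 1⟩ u
      {w ∈ W | w ∈ A}).A = ({v | 0 < T v} : Finset V) := by
    ext v
    obtain rfl | hvu := eq_or_ne v u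
    · simp [mem_applyStep_A, A, Nat.pos_iff_ne_zero]
    · simp [mem_applyStep_A, A, hvu]
  rw [hA]
  refine ST4DegOn.congr (fun v hv => ?_) (fun v hv => ?_) h
  · have hvA : v ∈ A := (mem_applyStep_A.1 (hA ▸ hv)).1
    exact applyStep_add_operation_S hvA
  · exact applyStep_add_operation_T (Finset.mem_filter.1 hv).2

end Support

section Indicator

variable {α : Type*} [DecidableEq α]

theorem indicator_singleton_one (a : α) : ({a} : Set α).indicator (1 : α → ℕ) = Pi.single a 1 := by
  ext v
  simp [Set.indicator_apply, Pi.single_apply]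

theorem indicator_pair_one {a b : α} (hab : a ≠ b) :
    ({a, b} : Set α).indicator (1 : α → ℕ) = Pi.single a 1 + Pi.single b 1 := by
  rw [Set.insert_eq, Set.indicator_union_of_disjoint (Set.disjoint_singleton.2 hab),
    indicator_singleton_one, indicator_singleton_one]
  rfl

end Indicator

section Progression

variable {R : Type*} [CommRing R] [DecidableEq R]

/-- The multiplicity function of the arithmetic progression `a, a + q, …, a + (k - 1) q`, whose
terms need not be distinct. Rounds on a cycle are described by their sums of such functions. -/
def progression (a q : R) (k : ℕ) : R → ℕ :=
  ∑ j ∈ Finset.range k, Pi.single (a + j * q) 1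

theorem progression_succ (a q : R) (k : ℕ) :
    progression a q (k + 1) = progression a q k + Pi.single (a + k * q) 1 :=
  Finset.sum_range_succ _ _

theorem progression_succ' (a q : R) (k : ℕ) :
    progression a q (k + 1) = Pi.single a 1 + progression (a + q) q k := by
  simp only [progression, Finset.sum_range_succ', Nat.cast_zero, zero_mul, add_zero,
    Nat.cast_succ, add_one_mul, add_comm, add_assoc]

theorem progression_two_add_progression_add_one (a : R) (k : ℕ) :
    progression a 2 k + progression (a + 1) 2 k = progression a 1 (2 * k) := by
  induction k with
  | zero => simp [progression]
  | succ k ih =>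
    rw [Nat.mul_succ, progression_succ, progression_succ, progression_succ a 1,
      progression_succ a 1, ← ih]
    have hodd : a + 1 + (k : R) * 2 = a + ((2 * k + 1 : ℕ) : R) * 1 := by push_cast; ring
    have heven : a + (k : R) * 2 = a + ((2 * k : ℕ) : R) * 1 := by push_cast; ring
    rw [hodd, heven]
    abel

theorem progression_apply_eq_zero {a q v : R} {k : ℕ} (h : ∀ j < k, v ≠ a + j * q) :
    progression a q k v = 0 := by
  simp only [progression, Finset.sum_apply]
  exact Finset.sum_eq_zero fun j hj => Pi.single_eq_of_ne (h j (Finset.mem_range.1 hj)) _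

theorem sum_single_add_eq_one [Fintype R] (b : R) : ∑ i : R, (Pi.single (i + b) 1 : R → ℕ) = 1 :=
  (Equiv.sum_comp (Equiv.addRight b) fun i => (Pi.single i 1 : R → ℕ)).trans
    (Finset.univ_sum_single 1)

theorem sum_progression_add [Fintype R] (b q : R) (k : ℕ) :
    ∑ i : R, progression (i + b) q k = fun _ => k := by
  simp only [progression]
  rw [Finset.sum_comm]
  simp only [add_assoc, sum_single_add_eq_one]
  ext v
  simp

end Progression

section CycleRounds

open scoped Fin.CommRing

theorem progression_one_eq_one {n : ℕ} [NeZero n] (a : Fin n) : progression a 1 n = 1 := by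
  rw [progression, Finset.sum_range]
  simp only [Fin.cast_val_eq_self, mul_one, add_comm a]
  exact sum_single_add_eq_one a

theorem natCast_ne_zero_of_lt {n k : ℕ} [NeZero n] (hk : 0 < k) (hkn : k < n) :
    (k : Fin n) ≠ 0 :=
  fun h => (Nat.le_of_dvd hk (Fin.natCast_eq_zero.1 h)).not_gt hkn

/-- Adding the operations on `a, a + 2, …, a + 2d - 2`, each of which saves the preceding vertex of
the cycle. -/
theorem ST4DegSupport.add_sweep {n : ℕ} [NeZero n] {S T : Fin n → ℕ} {m : ℕ}
    (h : ST4DegSupport (SimpleGraph.cycleGraph n) S T) (hm : ∀ v, S v + T v = m) {d : ℕ}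
    (hd : 2 * d < n) (a : Fin n) :
    ST4DegSupport (SimpleGraph.cycleGraph n)
      (S + progression (a + 1) 2 d) (T + progression a 2 d) := by
  induction d generalizing a with
  | zero => simpa [progression] using h
  | succ d ih =>
    have hnbr := cycleGraph_neighborSet_of_two_le (by omega) a
    have hsum : ∀ v, (S + progression (a + 2 + 1) 2 d) v + (T + progression (a + 2) 2 d) v =
        m + progression (a + 2) 1 (2 * d) v := fun v => by
      rw [← hm v, ← progression_two_add_progression_add_one]
      simp only [Pi.add_apply]
      ring
    have hfresh : progression (a + 2) 1 (2 * d) (a - 1) = 0 :=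
      progression_apply_eq_zero fun j hj h0 => natCast_ne_zero_of_lt (n := n) (k := j + 3)
        (by omega) (by omega) (by push_cast; linear_combination -h0)
    have hunsaved : (SimpleGraph.cycleGraph n).neighborSet a \ ({a - 1} : Finset (Fin n))
        = {a + 1} := by
      have hne : a + 1 ≠ a - 1 := fun h0 => natCast_ne_zero_of_lt (n := n) (k := 2)
        (by omega) (by omega) (by push_cast; linear_combination h0)
      ext v
      simp only [hnbr, Finset.coe_singleton, Set.mem_sdiff, Set.mem_insert_iff,
        Set.mem_singleton_iff]
      grind
    have hsave := (ih (by omega) (a + 2)).add_operation (u := a) (W := {a - 1}) (by simp)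
      (by simp [← SimpleGraph.mem_neighborSet, hnbr])
      (by rw [Finset.sum_singleton, hsum, hsum, hfresh]; omega)
    rw [hunsaved, indicator_singleton_one] at hsave
    rw [progression_succ', progression_succ', add_right_comm a 1 2]
    convert hsave using 1 <;> abel

variable {r : ℕ}

theorem progression_round (i : Fin (2 * r + 1)) :
    progression (i + 1) 2 r + Pi.single (i - 1) 1 + progression i 2 r = 1 := by
  have hpred : i - 1 = i + ((2 * r : ℕ) : Fin (2 * r + 1)) * 1 := by
    have : ((2 * r + 1 : ℕ) : Fin (2 * r + 1)) = 0 := Fin.natCast_self _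
    push_cast at this ⊢
    linear_combination -this
  calc _ = progression i 2 r + progression (i + 1) 2 r + Pi.single (i - 1) 1 := by abel
    _ = progression i 1 (2 * r + 1) := by
        rw [progression_two_add_progression_add_one, hpred, progression_succ]
    _ = 1 := progression_one_eq_one i

/-- The first operation of a round saves nothing, so both neighbours of `i` pay; each later one
saves the neighbour that has paid already. -/
theorem ST4DegSupport.add_round (hr : 1 ≤ r) {S T : Fin (2 * r + 1) → ℕ} {m : ℕ}
    (h : ST4DegSupport (SimpleGraph.cycleGraph (2 * r + 1)) S T) (hm : ∀ v, S v + T v = m)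
    (i : Fin (2 * r + 1)) :
    ST4DegSupport (SimpleGraph.cycleGraph (2 * r + 1))
      (S + (progression (i + 1) 2 r + Pi.single (i - 1) 1)) (T + progression i 2 r) := by
  obtain ⟨d, rfl⟩ := Nat.exists_eq_add_of_le' hr
  have hne : i - 1 ≠ i + 1 := fun h0 => natCast_ne_zero_of_lt (n := 2 * (d + 1) + 1) (k := 2)
    (by omega) (by omega) (by push_cast; linear_combination -h0)
  have hfirst := (h.add_sweep hm (by omega) (i + 2) (d := d)).add_operation (u := i) (W := ∅)
    (by simp) (by simp) (by simp)
  rw [Finset.coe_empty, Set.sdiff_empty, cycleGraph_neighborSet_of_two_le (by omega),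
    indicator_pair_one hne] at hfirst
  rw [progression_succ', progression_succ', add_right_comm i 1 2]
  convert hfirst using 1 <;> abel

theorem st4DegSupport_rounds (hr : 1 ≤ r) (I : Finset (Fin (2 * r + 1))) :
    ST4DegSupport (SimpleGraph.cycleGraph (2 * r + 1))
      (∑ i ∈ I, (progression (i + 1) 2 r + Pi.single (i - 1) 1))
      (∑ i ∈ I, progression i 2 r) := by
  induction I using Finset.induction_on with
  | empty => exact st4DegSupport_zero _ _
  | insert i I hi ih =>
    have hm := fun v => congrFun (calc
      ∑ i ∈ I, (progression (i + 1) 2 r + Pi.single (i - 1) 1) + ∑ i ∈ I, progression i 2 r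
          = ∑ _i ∈ I, 1 := by
        rw [← Finset.sum_add_distrib]
        exact Finset.sum_congr rfl fun i _ => progression_round i
      _ = (I.card : Fin (2 * r + 1) → ℕ) := by simp) v
    convert ih.add_round hr hm i using 1 <;> exact (Finset.sum_insert hi).trans (add_comm _ _)

theorem st4Deg_odd_cycle (hr : 1 ≤ r) :
    ST4Deg (SimpleGraph.cycleGraph (2 * r + 1)) (fun _ => r + 1) (fun _ => r) := by
  have h := st4DegSupport_rounds hr Finset.univ
  have hT := sum_progression_add (0 : Fin (2 * r + 1)) 2 r
  simp only [add_zero] at hT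
  simp only [Finset.sum_add_distrib, sum_progression_add, sub_eq_add_neg, sum_single_add_eq_one,
    hT] at h
  exact h.st4Deg fun _ => hr

end CycleRounds

/-- For every integer `r ≥ 1`, the odd cycle `C_{2r+1}` satisfies
`ST⁽⁴⁾*(C_{2r+1}) = 2 + 1/r`. -/
theorem st4Star_odd_cycle (r : ℕ) (hr : 1 ≤ r) :
    ST4Star (SimpleGraph.cycleGraph (2 * r + 1)) = 2 + 1 / (r : ℝ) := by
  have hr0 : (0 : ℝ) < r := by exact_mod_cast hr
  refine IsLeast.csInf_eq ⟨⟨r + 1, r, hr, st4Deg_odd_cycle hr, ?_⟩, ?_⟩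
  · push_cast
    field_simp
    ring
  · rintro x ⟨s, t, ht, hdeg, rfl⟩
    have ht0 : (0 : ℝ) < t := by exact_mod_cast ht
    have hα : (SimpleGraph.cycleGraph (2 * r + 1)).indepNum ≤ r :=
      (indepNum_cycleGraph_le (by omega)).trans (by omega)
    have hcount : (2 * r + 1) * t ≤ (s + t) * r := by
      simpa using (hdeg.st3Deg.card_mul_le_mul_indepNum ht).trans (Nat.mul_le_mul_left _ hα)
    calc 2 + 1 / (r : ℝ) = (2 * r + 1) / r := by field_simp
      _ ≤ (s + t) / t := by
        rw [div_le_div_iff₀ hr0 ht0]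
        exact_mod_cast hcount

end StrictDeg
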